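/- arXiv:1507.08779 — 2 statements merged into one kernel-verified Lean document; each statement's English description precedes it below -/
import Mathlib

section
/- Suppose ε = (ε_t)_{t∈[0,T]} is a bounded, jointly measurable, F-adapted process such that for every t ∈ [0,T], ε_t = E[∫_t^T exp(−∫_t^u ((1−α_s)r_s + α_s c_s) ds) · p_u du | F_t] almost surely. Then ε also solves the coupled close-out/collateral system: for every t ∈ [0,T], almost surely ε_t = E[∫_t^T exp(−∫_t^u r_s ds) · (p_u + (r_u − c_u)·α_u·ε_u) du | F_t]. In particular, for α ≡ 1 (perfect collateralization) the pre-default value satisfies ε_t = E[∫_t^T exp(−∫_t^u c_s ds) · p_u du | F_t]. -/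
open MeasureTheory

lemma aux_intable {f : ℝ → ℝ} {M : ℝ} (hf : Measurable f) (hb : ∀ s, |f s| ≤ M) (a b : ℝ) :
    IntervalIntegrable f volume a b := by
  refine (intervalIntegrable_const (c := M)).mono_fun hf.aestronglyMeasurable ?_
  refine Filter.Eventually.of_forall fun s => ?_
  exact (hb s).trans (le_abs_self M)

lemma aux_bound {f : ℝ → ℝ} {M : ℝ} (hb : ∀ s, |f s| ≤ M) (a b : ℝ) :
    |∫ s in a..b, f s| ≤ M * |b - a| := by
  have := intervalIntegral.norm_integral_le_of_norm_le_const (a := a) (b := b) (f := f) (C := M)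
    (fun x _ => by rw [Real.norm_eq_abs]; exact hb x)
  simpa [Real.norm_eq_abs] using this

lemma aux_cont {f : ℝ → ℝ} {M : ℝ} (hf : Measurable f) (hb : ∀ s, |f s| ≤ M) (a : ℝ) :
    Continuous (fun u => ∫ s in a..u, f s) :=
  intervalIntegral.continuous_primitive (fun x y => aux_intable hf hb x y) a

lemma aux_expAC {k : ℝ → ℝ} {M : ℝ} (hk : Measurable k) (hb : ∀ s, |k s| ≤ M) (t T : ℝ) :
    AbsolutelyContinuousOnInterval (fun u => Real.exp (-(∫ s in t..u, k s))) t T := by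
  have hM : 0 ≤ M := (abs_nonneg _).trans (hb 0)
  have hK : LipschitzWith M.toNNReal (fun u => -(∫ s in t..u, k s)) := by
    refine LipschitzWith.of_dist_le_mul fun x y => ?_
    rw [Real.dist_eq, Real.dist_eq, Real.coe_toNNReal _ hM]
    have : -(∫ s in t..x, k s) - -(∫ s in t..y, k s) = ∫ s in x..y, k s := by
      rw [← intervalIntegral.integral_interval_sub_left (aux_intable hk hb t y)
        (aux_intable hk hb t x)]
      ring
    rw [this, abs_sub_comm x y]
    exact aux_bound hb x y
  have hcomp : IsCompact ((fun u => -(∫ s in t..u, k s)) '' Set.uIcc t T) :=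
    isCompact_uIcc.image hK.continuous
  obtain ⟨L, hL⟩ := LocallyLipschitzOn.exists_lipschitzOnWith_of_compact hcomp
    ((Real.contDiff_exp (n := 1)).locallyLipschitz.locallyLipschitzOn)
  exact (hL.comp hK.lipschitzOnWith (Set.mapsTo_image _ _)).absolutelyContinuousOnInterval

lemma aux_X {b p : ℝ → ℝ} {Mb : ℝ} (hb : Measurable b)
    (hbb : ∀ s, |b s| ≤ Mb) (t T u : ℝ) 
    (hq : ∀ x y, IntervalIntegrable (fun v => Real.exp (-(∫ s in t..v, b s)) * p v) volume x y) :
    ∫ v in u..T, Real.exp (-(∫ s in u..v, b s)) * p v =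
      Real.exp (∫ s in t..u, b s) * ((∫ v in t..T, Real.exp (-(∫ s in t..v, b s)) * p v)
        - ∫ v in t..u, Real.exp (-(∫ s in t..v, b s)) * p v) := by
  rw [intervalIntegral.integral_interval_sub_left (hq _ _) (hq _ _),
    ← intervalIntegral.integral_const_mul]
  refine intervalIntegral.integral_congr fun v _ => ?_
  rw [← mul_assoc, ← Real.exp_add, ← intervalIntegral.integral_interval_sub_left
    (aux_intable hb hbb t v) (aux_intable hb hbb t u)]
  congr 2
  ring

lemma aux_q {b p : ℝ → ℝ} {Mb Mp : ℝ} (hb : Measurable b) (hp : Measurable p)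
    (hbb : ∀ s, |b s| ≤ Mb) (hpb : ∀ s, |p s| ≤ Mp) (t : ℝ) (x y : ℝ) :
    IntervalIntegrable (fun v => Real.exp (-(∫ s in t..v, b s)) * p v) volume x y :=
  (aux_intable hp hpb x y).continuousOn_mul
    (Real.continuous_exp.comp (aux_cont hb hbb t).neg).continuousOn

lemma aux_path {r k b p : ℝ → ℝ} {Mr Mk Mb Mp : ℝ} (hr : Measurable r) (hk : Measurable k)
    (hb : Measurable b) (hp : Measurable p)
    (hrb : ∀ s, |r s| ≤ Mr) (hkb : ∀ s, |k s| ≤ Mk)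
    (hbb : ∀ s, |b s| ≤ Mb) (hpb : ∀ s, |p s| ≤ Mp) (hbrk : ∀ s, b s = r s - k s) (t T : ℝ) :
    ∫ v in t..T, Real.exp (-(∫ s in t..v, b s)) * p v =
    ∫ u in t..T, Real.exp (-(∫ s in t..u, r s)) * (p u + k u *
      (Real.exp (∫ s in t..u, b s) * ((∫ v in t..T, Real.exp (-(∫ s in t..v, b s)) * p v)
        - ∫ v in t..u, Real.exp (-(∫ s in t..v, b s)) * p v))) := by
  have hq := aux_q hb hp hbb hpb t
  set q : ℝ → ℝ := fun v => Real.exp (-(∫ s in t..v, b s)) * p v with hqdef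
  have hf := aux_expAC hk hkb t T
  have hg : AbsolutelyContinuousOnInterval (fun u => (∫ v in t..T, q v) - ∫ v in t..u, q v) t T := by
    refine AbsolutelyContinuousOnInterval.sub (f := fun _ => ∫ v in t..T, q v) ?_
      ((hq t T).absolutelyContinuousOnInterval_intervalIntegral (c := t) (by simp))
    exact ((LipschitzWith.const _).lipschitzOnWith).absolutelyContinuousOnInterval
  have h := hf.integral_deriv_mul_eq_sub hg
  simp only [sub_self, mul_zero, intervalIntegral.integral_same, neg_zero, Real.exp_zero,
    sub_zero, one_mul, zero_sub] at h
  refine (neg_eq_iff_eq_neg.mp h.symm).trans ?_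
  rw [← intervalIntegral.integral_neg]
  refine intervalIntegral.integral_congr_ae ?_
  filter_upwards [(aux_intable hk hkb t T).ae_hasDerivAt_integral,
    (hq t T).ae_hasDerivAt_integral] with u h1 h2 hu
  have hu' := Set.uIoc_subset_uIcc hu
  have d1 := ((h1 hu' t (by simp)).neg.exp).deriv
  have d2 := ((h2 hu' t (by simp)).const_sub (∫ v in t..T, q v)).deriv
  rw [d2]
  erw [d1]
  have hR : ∫ s in t..u, b s = (∫ s in t..u, r s) - ∫ s in t..u, k s := by
    rw [← intervalIntegral.integral_sub (aux_intable hr hrb _ _) (aux_intable hk hkb _ _)]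
    exact intervalIntegral.integral_congr fun s _ => hbrk s
  have e1 : Real.exp (-(∫ s in t..u, r s)) * Real.exp (∫ s in t..u, b s)
      = Real.exp (-(∫ s in t..u, k s)) := by
    rw [← Real.exp_add, hR]; congr 1; ring
  have e2 : Real.exp (-(∫ s in t..u, k s)) * q u = Real.exp (-(∫ s in t..u, r s)) * p u := by
    rw [hqdef]; simp only; rw [← mul_assoc, ← Real.exp_add, hR]; congr 2; ring
  simp only [Pi.neg_apply]
  linear_combination e2 - k u * ((∫ v in t..T, q v) - ∫ v in t..u, q v) * e1

lemma aux_primitive {Ω : Type*} {m : MeasurableSpace Ω} {f : ℝ → Ω → ℝ}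
    (hf : Measurable (Function.uncurry f)) (a : ℝ) :
    Measurable (fun z : ℝ × Ω => ∫ s in a..z.1, f s z.2) := by
  simp only [intervalIntegral]
  have key : ∀ S : Set ((ℝ × Ω) × ℝ), MeasurableSet S →
      Measurable (fun z : ℝ × Ω => ∫ s, S.indicator (fun w => f w.2 w.1.2) (z, s)) := by
    intro S hS
    refine (StronglyMeasurable.integral_prod_right' (f := S.indicator (fun w => f w.2 w.1.2))
      ?_).measurable
    refine Measurable.stronglyMeasurable (Measurable.indicator ?_ hS)
    exact hf.comp (by fun_prop : Measurable fun w : (ℝ × Ω) × ℝ => (w.2, w.1.2))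
  refine Measurable.sub ?_ ?_
  · convert key {w | a < w.2 ∧ w.2 ≤ w.1.1} ?_ using 2 with z
    · rw [← integral_indicator measurableSet_Ioc]; rfl
    · measurability
  · convert key {w | w.1.1 < w.2 ∧ w.2 ≤ a} ?_ using 2 with z
    · rw [← integral_indicator measurableSet_Ioc]; rfl
    · measurability

lemma aux_min {Ω : Type*} {m0 : MeasurableSpace Ω} {F : Filtration ℝ m0} {f : ℝ → Ω → ℝ}
    (hf : IsStronglyProgressive F f) (u : ℝ) :
    Measurable[(inferInstance : MeasurableSpace ℝ).prod (F u)]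
      (fun z : ℝ × Ω => f (min z.1 u) z.2) := by
  let _ : MeasurableSpace Ω := F u
  have h := (hf u).measurable
  exact h.comp (g := fun p : Set.Iic u × Ω => f p.1 p.2)
    (f := fun z : ℝ × Ω => ((⟨min z.1 u, Set.mem_Iic.mpr (min_le_right _ _)⟩ : Set.Iic u), z.2))
    (Measurable.prodMk (Measurable.subtype_mk (by fun_prop)) (by fun_prop))

lemma aux_joint {Ω : Type*} {m0 : MeasurableSpace Ω} {F : Filtration ℝ m0} {f : ℝ → Ω → ℝ}
    (hf : IsStronglyProgressive F f) : Measurable (Function.uncurry f) := by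
  refine measurable_of_tendsto_metrizable (f := fun (n : ℕ) (z : ℝ × Ω) => f (min z.1 n) z.2)
    (fun n => ?_) ?_
  · exact (aux_min hf n).mono (sup_le_sup le_rfl (MeasurableSpace.comap_mono (F.le n))) le_rfl
  · rw [tendsto_pi_nhds]
    intro z
    refine tendsto_const_nhds.congr' ?_
    filter_upwards [Filter.eventually_ge_atTop ⌈z.1⌉₊] with n hn
    rw [min_eq_left ((Nat.le_ceil _).trans (by exact_mod_cast hn))]
    rfl

lemma aux_primitive_adapted {Ω : Type*} {m0 : MeasurableSpace Ω} {F : Filtration ℝ m0}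
    {f : ℝ → Ω → ℝ} (hf : IsStronglyProgressive F f) {t u : ℝ} (htu : t ≤ u) :
    Measurable[F u] (fun ω => ∫ s in t..u, f s ω) := by
  have h := @aux_primitive Ω (F u) (fun s ω => f (min s u) ω) (aux_min hf u) t
  have h2 : Measurable[F u] (fun ω => ∫ s in t..u, f (min s u) ω) :=
    @Measurable.comp _ _ _ (F u) (_) _ _ (fun ω : Ω => (u, ω)) h
      (@measurable_prodMk_left _ _ _ (F u) u)
  convert h2 using 2 with ω
  refine intervalIntegral.integral_congr fun s hs => ?_
  rw [Set.uIcc_of_le htu] at hs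
  simp only [min_eq_left hs.2]

lemma aux_prodint {Ω : Type*} {m0 : MeasurableSpace Ω} {μ : Measure Ω} [IsFiniteMeasure μ]
    {f : ℝ → Ω → ℝ} (hf : Measurable (Function.uncurry f)) {t T M : ℝ} (htT : t ≤ T)
    (hb : ∀ u ∈ Set.Icc t T, ∀ ω, |f u ω| ≤ M) :
    Integrable (Function.uncurry f) ((volume.restrict (Set.uIoc t T)).prod μ) := by
  rw [Set.uIoc_of_le htT]
  refine Integrable.of_bound hf.aestronglyMeasurable M ?_
  have h : ∀ᵐ u ∂(volume.restrict (Set.Ioc t T)), u ∈ Set.Ioc t T :=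
    ae_restrict_mem measurableSet_Ioc
  filter_upwards [Measure.quasiMeasurePreserving_fst.ae h] with z hz
  exact hb z.1 ⟨hz.1.le, hz.2⟩ z.2

/-- The close-out value discounted at the blended rate
`(1−α)r + αc` solves the coupled close-out/collateral system; in particular,
under perfect collateralization (`α ≡ 1`) it is the collateral-discounted value. -/
theorem stmt_5
    {Ω : Type*} {m0 : MeasurableSpace Ω} {Q : Measure Ω} [IsProbabilityMeasure Q]
    (F : Filtration ℝ m0)
    (T : ℝ) (hT : 0 ≤ T)
    (r c p α : ℝ → Ω → ℝ)
    (hr : ProgMeasurable F r) (hc : ProgMeasurable F c)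
    (hp : ProgMeasurable F p) (hα : ProgMeasurable F α)
    (Mr Mc Mp : ℝ)
    (hrbdd : ∀ t ω, |r t ω| ≤ Mr) (hcbdd : ∀ t ω, |c t ω| ≤ Mc)
    (hpbdd : ∀ t ω, |p t ω| ≤ Mp)
    (hα01 : ∀ t ω, α t ω ∈ Set.Icc (0 : ℝ) 1)
    (ε : ℝ → Ω → ℝ)
    (Mε : ℝ) (hεbdd : ∀ t ω, |ε t ω| ≤ Mε)
    (hεmeas : Measurable (Function.uncurry ε))
    (hεadapted : Adapted F ε)
    (hε : ∀ t, 0 ≤ t → t ≤ T →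
      ε t =ᵐ[Q] Q[(fun ω => ∫ u in t..T,
        Real.exp (-(∫ s in t..u, ((1 - α s ω) * r s ω + α s ω * c s ω))) * p u ω) | F t]) :
    (∀ t, 0 ≤ t → t ≤ T →
      ε t =ᵐ[Q] Q[(fun ω => ∫ u in t..T,
        Real.exp (-(∫ s in t..u, r s ω)) *
          (p u ω + (r u ω - c u ω) * α u ω * ε u ω)) | F t])
    ∧ ((∀ t ω, α t ω = 1) →
      ∀ t, 0 ≤ t → t ≤ T →
        ε t =ᵐ[Q] Q[(fun ω => ∫ u in t..T,
          Real.exp (-(∫ s in t..u, c s ω)) * p u ω) | F t]) := by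
  refine ⟨fun t ht htT => ?_, fun h1 t ht htT => ?_⟩
  swap
  · have := hε t ht htT
    simpa [h1] using this
  have mr := aux_joint hr
  have mc := aux_joint hc
  have mp := aux_joint hp
  have mα := aux_joint hα
  obtain ⟨b, hb⟩ : ∃ b : ℝ → Ω → ℝ, b = fun s ω => (1 - α s ω) * r s ω + α s ω * c s ω := ⟨_, rfl⟩
  obtain ⟨k, hk⟩ : ∃ k : ℝ → Ω → ℝ, k = fun s ω => (r s ω - c s ω) * α s ω := ⟨_, rfl⟩
  have mb : Measurable (Function.uncurry b) := by
    rw [hb]; exact ((measurable_const.sub mα).mul mr).add (mα.mul mc)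
  have mk : Measurable (Function.uncurry k) := by
    rw [hk]; exact (mr.sub mc).mul mα
  have pathm : ∀ {f : ℝ → Ω → ℝ}, Measurable (Function.uncurry f) → ∀ ω, Measurable fun s => f s ω :=
    fun hf ω => hf.comp measurable_prodMk_right
  have bb : ∀ s ω, |b s ω| ≤ Mr + Mc := by
    intro s ω
    rw [hb]
    obtain ⟨h0, h1⟩ := hα01 s ω
    refine (abs_add_le _ _).trans (add_le_add ?_ ?_)
    · rw [abs_mul, abs_of_nonneg (by linarith : 0 ≤ 1 - α s ω)]
      nlinarith [hrbdd s ω, abs_nonneg (r s ω)]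
    · rw [abs_mul, abs_of_nonneg h0]
      nlinarith [hcbdd s ω, abs_nonneg (c s ω)]
  have kb : ∀ s ω, |k s ω| ≤ Mr + Mc := by
    intro s ω
    rw [hk]
    obtain ⟨h0, h1⟩ := hα01 s ω
    have : |r s ω - c s ω| ≤ Mr + Mc :=
      (abs_sub _ _).trans (add_le_add (hrbdd s ω) (hcbdd s ω))
    simp only
    rw [abs_mul, abs_of_nonneg h0]
    nlinarith [abs_nonneg (r s ω - c s ω)]
  have hbrk : ∀ s ω, b s ω = r s ω - k s ω := by
    intro s ω; rw [hb, hk]; simp only; ring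
  -- the pathwise value process
  obtain ⟨X, hX⟩ : ∃ X : ℝ → Ω → ℝ, X = fun u ω => Real.exp (∫ s in t..u, b s ω) *
      ((∫ v in t..T, Real.exp (-(∫ s in t..v, b s ω)) * p v ω)
        - ∫ v in t..u, Real.exp (-(∫ s in t..v, b s ω)) * p v ω) := ⟨_, rfl⟩
  have mI := aux_primitive mb t
  have mq : Measurable (Function.uncurry
      fun v ω => Real.exp (-(∫ s in t..v, b s ω)) * p v ω) :=
    (Real.measurable_exp.comp mI.neg).mul mp
  have mJ := aux_primitive mq t
  have mX : Measurable (Function.uncurry X) := by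
    rw [hX]
    refine (Real.measurable_exp.comp mI).mul (Measurable.sub ?_ mJ)
    exact mJ.comp (by fun_prop : Measurable fun z : ℝ × Ω => (T, z.2))
  have hXeq : ∀ u ω, X u ω = ∫ v in u..T, Real.exp (-(∫ s in u..v, b s ω)) * p v ω := by
    intro u ω
    rw [hX]
    exact (aux_X (pathm mb ω) (fun s => bb s ω) t T u (aux_q (pathm mb ω) (pathm mp ω)
      (fun s => bb s ω) (fun s => hpbdd s ω) t)).symm
  have expb : ∀ {f : ℝ → Ω → ℝ} {M : ℝ}, (∀ s ω, |f s ω| ≤ M) → ∀ x ∈ Set.Icc t T,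
      ∀ y ∈ Set.Icc t T, ∀ ω, |Real.exp (-(∫ s in x..y, f s ω))| ≤ Real.exp (M * (T - t)) := by
    intro f M hf x hx y hy ω
    rw [abs_of_pos (Real.exp_pos _), Real.exp_le_exp]
    have hM : 0 ≤ M := (abs_nonneg _).trans (hf 0 ω)
    refine (neg_le_abs _).trans ((aux_bound (fun s => hf s ω) x y).trans ?_)
    refine mul_le_mul_of_nonneg_left ?_ hM
    rw [abs_le]; constructor <;> linarith [hx.1, hx.2, hy.1, hy.2]
  obtain ⟨MX, XB⟩ : ∃ MX, ∀ u ∈ Set.Icc t T, ∀ ω, |X u ω| ≤ MX := by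
    refine ⟨Real.exp ((Mr + Mc) * (T - t)) * Mp * (T - t), fun u hu ω => ?_⟩
    rw [hXeq]
    have hMp : 0 ≤ Mp := (abs_nonneg _).trans (hpbdd 0 ω)
    have := intervalIntegral.norm_integral_le_of_norm_le_const (a := u) (b := T)
      (f := fun v => Real.exp (-(∫ s in u..v, b s ω)) * p v ω)
      (C := Real.exp ((Mr + Mc) * (T - t)) * Mp) (fun v hv => by
        rw [Set.uIoc_of_le hu.2] at hv
        rw [norm_mul]
        exact mul_le_mul (expb bb u hu v ⟨hu.1.trans hv.1.le, hv.2⟩ ω) (hpbdd v ω)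
          (norm_nonneg _) (Real.exp_pos _).le)
    refine this.trans (mul_le_mul_of_nonneg_left ?_ (by positivity))
    rw [abs_of_nonneg (by linarith [hu.2])]
    linarith [hu.1]
  -- generic integrand
  have mR := aux_primitive mr t
  have mG : ∀ {Y : ℝ → Ω → ℝ}, Measurable (Function.uncurry Y) → Measurable (Function.uncurry
      fun u ω => Real.exp (-(∫ s in t..u, r s ω)) * (p u ω + k u ω * Y u ω)) :=
    fun hY => (Real.measurable_exp.comp mR.neg).mul (mp.add (mk.mul hY))
  have bG : ∀ {Y : ℝ → Ω → ℝ} {M : ℝ}, (∀ u ∈ Set.Icc t T, ∀ ω, |Y u ω| ≤ M) →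
      ∀ u ∈ Set.Icc t T, ∀ ω,
      |Real.exp (-(∫ s in t..u, r s ω)) * (p u ω + k u ω * Y u ω)| ≤
        Real.exp (Mr * (T - t)) * (Mp + (Mr + Mc) * M) := by
    intro Y M hY u hu ω
    rw [abs_mul]
    refine mul_le_mul (expb hrbdd t ⟨le_rfl, htT⟩ u hu ω) ?_ (abs_nonneg _) (Real.exp_pos _).le
    refine (abs_add_le _ _).trans (add_le_add (hpbdd u ω) ?_)
    rw [abs_mul]
    exact mul_le_mul (kb u ω) (hY u hu ω) (abs_nonneg _) ((abs_nonneg _).trans (kb u ω))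
  have mslice : ∀ {Y : ℝ → Ω → ℝ}, Measurable (Function.uncurry Y) → ∀ u, Measurable (Y u) :=
    fun hY u => hY.comp measurable_prodMk_left
  have intY : ∀ {Y : ℝ → Ω → ℝ} {M : ℝ}, Measurable (Function.uncurry Y) →
      (∀ u ∈ Set.Icc t T, ∀ ω, |Y u ω| ≤ M) → ∀ u ∈ Set.Icc t T, Integrable (Y u) Q :=
    fun {Y M} hY hb u hu => Integrable.of_bound (mslice hY u).aestronglyMeasurable M
      (Filter.Eventually.of_forall fun ω => hb u hu ω)
  have εB : ∀ u ∈ Set.Icc t T, ∀ ω, |ε u ω| ≤ Mε := fun u _ ω => hεbdd u ω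
  have hεX : ∀ u ∈ Set.Icc t T, ε u =ᵐ[Q] Q[X u | F u] := by
    intro u hu
    have := hε u (ht.trans hu.1) hu.2
    have e : X u = (fun ω => ∫ v in u..T,
        Real.exp (-(∫ s in u..v, ((1 - α s ω) * r s ω + α s ω * c s ω))) * p v ω) := by
      funext ω; rw [hXeq, hb]
    rwa [e]
  have hXt : ∀ ω, X t ω = ∫ u in t..T, Real.exp (-(∫ s in t..u, r s ω)) *
      (p u ω + k u ω * X u ω) := by
    intro ω
    have := aux_path (pathm mr ω) (pathm mk ω) (pathm mb ω) (pathm mp ω) (fun s => hrbdd s ω)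
      (fun s => kb s ω) (fun s => bb s ω) (fun s => hpbdd s ω) (fun s => hbrk s ω) t T
    rw [hXeq, this, hX]
  have htI : t ∈ Set.Icc t T := ⟨le_rfl, htT⟩
  have hgoal : (fun ω => ∫ u in t..T, Real.exp (-(∫ s in t..u, r s ω)) *
          (p u ω + (r u ω - c u ω) * α u ω * ε u ω)) =
      fun ω => ∫ u in t..T, Real.exp (-(∫ s in t..u, r s ω)) * (p u ω + k u ω * ε u ω) := by
    rw [hk]
  rw [hgoal]
  refine ae_eq_condExp_of_forall_setIntegral_eq (F.le t) ?_ ?_ ?_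
    (hεadapted t).stronglyMeasurable.aestronglyMeasurable
  · have := (aux_prodint (μ := Q) (mG hεmeas) htT (bG εB)).swap.integral_prod_left
    simp only [Set.uIoc_of_le htT] at this
    simp only [intervalIntegral.integral_of_le htT]
    exact this
  · intro s _ _
    exact (intY hεmeas εB t htI).integrableOn
  · intro A hA _
    have h1 : ∫ ω in A, ε t ω ∂Q = ∫ ω in A, X t ω ∂Q := by
      rw [← setIntegral_condExp (F.le t) (intY mX XB t htI) hA]
      exact setIntegral_congr_ae (F.le t A hA) ((hεX t htI).mono fun ω h _ => h)
    rw [h1]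
    simp only [hXt]
    rw [← intervalIntegral_integral_swap (aux_prodint (mG mX) htT (bG XB)),
      ← intervalIntegral_integral_swap (aux_prodint (mG hεmeas) htT (bG εB))]
    refine intervalIntegral.integral_congr fun u hu => ?_
    rw [Set.uIcc_of_le htT] at hu
    have hAu : MeasurableSet[F u] A := F.mono hu.1 A hA
    -- the F u-measurable multiplier
    have mZ : StronglyMeasurable[F u] (fun ω => Real.exp (-(∫ s in t..u, r s ω)) * k u ω) := by
      refine Measurable.stronglyMeasurable (Measurable.mul ?_ ?_)
      · exact Real.measurable_exp.comp (aux_primitive_adapted hr hu.1).neg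
      · rw [hk]
        exact ((IsStronglyProgressive.stronglyAdapted hr u).measurable.sub (IsStronglyProgressive.stronglyAdapted hc u).measurable).mul
          (IsStronglyProgressive.stronglyAdapted hα u).measurable
    have bZ : ∀ ω, ‖Real.exp (-(∫ s in t..u, r s ω)) * k u ω‖ ≤
        Real.exp (Mr * (T - t)) * (Mr + Mc) := by
      intro ω
      rw [norm_mul]
      exact mul_le_mul (expb hrbdd t htI u hu ω) (kb u ω) (abs_nonneg _) (Real.exp_pos _).le
    have intZ : ∀ {Y : ℝ → Ω → ℝ} {M : ℝ}, Measurable (Function.uncurry Y) →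
        (∀ u ∈ Set.Icc t T, ∀ ω, |Y u ω| ≤ M) →
        Integrable ((fun ω => Real.exp (-(∫ s in t..u, r s ω)) * k u ω) * Y u) Q :=
      fun hY hb => (intY hY hb u hu).bdd_mul (mZ.mono (F.le u)).aestronglyMeasurable
        (Filter.Eventually.of_forall bZ)
    have hpull := condExp_mul_of_stronglyMeasurable_left (μ := Q) mZ (intZ mX XB) (intY mX XB u hu)
    have hkey : ∫ ω in A, ((fun ω => Real.exp (-(∫ s in t..u, r s ω)) * k u ω) * X u) ω ∂Q =
        ∫ ω in A, ((fun ω => Real.exp (-(∫ s in t..u, r s ω)) * k u ω) * ε u) ω ∂Q := by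
      rw [← setIntegral_condExp (F.le u) (intZ mX XB) hAu]
      refine setIntegral_congr_ae (F.le u A hAu) ?_
      filter_upwards [hpull, hεX u hu] with ω h2 h3 _
      rw [h2, Pi.mul_apply, Pi.mul_apply, h3]
    have intP : Integrable (fun ω => Real.exp (-(∫ s in t..u, r s ω)) * p u ω) Q := by
      refine Integrable.bdd_mul (c := Real.exp (Mr * (T - t)))
        (Integrable.of_bound (mslice mp u).aestronglyMeasurable Mp
          (Filter.Eventually.of_forall fun ω => hpbdd u ω)) ?_
        (Filter.Eventually.of_forall fun ω => expb hrbdd t htI u hu ω)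
      exact (mslice (Y := fun u ω => Real.exp (-(∫ s in t..u, r s ω)))
        (Real.measurable_exp.comp mR.neg) u).aestronglyMeasurable
    have split : ∀ {Y : ℝ → Ω → ℝ} {M : ℝ}, Measurable (Function.uncurry Y) →
        (∀ u ∈ Set.Icc t T, ∀ ω, |Y u ω| ≤ M) →
        ∫ ω in A, Real.exp (-(∫ s in t..u, r s ω)) * (p u ω + k u ω * Y u ω) ∂Q =
        (∫ ω in A, Real.exp (-(∫ s in t..u, r s ω)) * p u ω ∂Q) +
        ∫ ω in A, ((fun ω => Real.exp (-(∫ s in t..u, r s ω)) * k u ω) * Y u) ω ∂Q := by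
      intro Y M hY hb
      rw [← integral_add intP.integrableOn (intZ hY hb).integrableOn]
      refine integral_congr_ae (Filter.Eventually.of_forall fun ω => ?_)
      simp only [Pi.mul_apply]
      ring
    rw [split mX XB, split hεmeas εB, hkey]
end

section
/- In the Cox construction, fix a cure period δ > 0. For every T > 0 and every bounded, jointly measurable, F-progressively measurable process φ = (φ_u)_{u∈[0,T]}, one has E[1_{τ ≤ T} · 1_{τ_C < τ_I + δ} · φ_τ] = E[∫_0^T φ_u · λ^{δ,C}_u · exp(−(Λ^C_u + Λ^I_u)) du], where λ^{δ,C}_u := λ^C_u + λ^I_u · (1 − exp(−(Λ^C_{u+δ} − Λ^C_u))). That is, the effective intensity of the event that the counterparty defaults before the end of the investor's cure period is λ^{δ,C}_u = λ^C_u + λ^I_u (1 − D(u, u+δ; λ^C)). -/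
open MeasureTheory ProbabilityTheory
open scoped ENNReal

namespace Cox

/-- A bounded nonnegative measurable hazard rate. -/
structure Haz (a : ℝ → ℝ) (M : ℝ) : Prop where
  meas : Measurable a
  nonneg : ∀ t, 0 ≤ a t
  bdd : ∀ t, a t ≤ M

/-- Cumulative hazard. -/
noncomputable def cum (a : ℝ → ℝ) (s : ℝ) : ℝ := ∫ v in (0:ℝ)..s, a v

/-- Default time. -/
noncomputable def tau (a : ℝ → ℝ) (x : ℝ) : ℝ≥0∞ :=
  sInf {u : ℝ≥0∞ | ∃ s : ℝ, 0 ≤ s ∧ u = ENNReal.ofReal s ∧ x ≤ ∫ v in (0:ℝ)..s, a v}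

section
variable {a : ℝ → ℝ} {M : ℝ}

lemma Haz.ii (h : Haz a M) (s t : ℝ) : IntervalIntegrable a volume s t := by
  rw [intervalIntegrable_iff]
  refine Measure.integrableOn_of_bounded (M := M) (by simp) h.meas.aestronglyMeasurable ?_
  exact Filter.Eventually.of_forall fun x => by
    rw [Real.norm_eq_abs, abs_of_nonneg (h.nonneg x)]; exact h.bdd x

lemma Haz.sub (h : Haz a M) (s t : ℝ) : cum a t - cum a s = ∫ v in s..t, a v :=
  intervalIntegral.integral_interval_sub_left (h.ii _ _) (h.ii _ _)

lemma Haz.mono (h : Haz a M) : Monotone (cum a) := by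
  intro s t hst
  have := intervalIntegral.integral_nonneg (μ := volume) hst (fun u _ => h.nonneg u)
  rw [← h.sub] at this
  linarith

lemma cum_zero : cum a 0 = 0 := by simp [cum]

lemma Haz.cum_nonneg (h : Haz a M) {s : ℝ} (hs : 0 ≤ s) : 0 ≤ cum a s := by
  rw [← cum_zero (a := a)]; exact h.mono hs

lemma Haz.lip (h : Haz a M) (s t : ℝ) : |cum a t - cum a s| ≤ M * |t - s| := by
  rw [h.sub]
  rw [← Real.norm_eq_abs]
  refine intervalIntegral.norm_integral_le_of_norm_le_const (fun x _ => ?_)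
  rw [Real.norm_eq_abs, abs_of_nonneg (h.nonneg x)]; exact h.bdd x

lemma Haz.cont (h : Haz a M) : Continuous (cum a) :=
  intervalIntegral.continuous_primitive (fun s t => h.ii s t) 0

lemma exp_lip {x y : ℝ} (hx : 0 ≤ x) (hy : 0 ≤ y) :
    |Real.exp (-x) - Real.exp (-y)| ≤ |x - y| := by
  wlog hxy : x ≤ y generalizing x y
  · rw [abs_sub_comm, abs_sub_comm x]; exact this hy hx (le_of_not_ge hxy)
  have h1 : Real.exp (-y) ≤ Real.exp (-x) := Real.exp_le_exp.2 (by linarith)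
  rw [abs_of_nonneg (by linarith), abs_of_nonpos (by linarith)]
  have h2 : Real.exp (-y) = Real.exp (-x) * Real.exp (x - y) := by rw [← Real.exp_add]; ring_nf
  have h3 := Real.add_one_le_exp (x - y)
  have h4 : Real.exp (-x) ≤ 1 := Real.exp_le_one_iff.2 (by linarith)
  have h5 := Real.exp_pos (-x)
  nlinarith

lemma Haz.ftc (h : Haz a M) {s : ℝ} (hs : 0 ≤ s) :
    ∫ u in (0:ℝ)..s, a u * Real.exp (-cum a u) = 1 - Real.exp (-cum a s) := by
  have hac : AbsolutelyContinuousOnInterval (fun u => Real.exp (-cum a u)) 0 s := by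
    have hM : 0 ≤ M := (h.nonneg 0).trans (h.bdd 0)
    refine LipschitzOnWith.absolutelyContinuousOnInterval (K := ⟨M, hM⟩) ?_
    refine LipschitzOnWith.of_dist_le_mul fun x hx y hy => ?_
    rw [Set.uIcc_of_le hs] at hx hy
    rw [Real.dist_eq, Real.dist_eq]
    exact (exp_lip (h.cum_nonneg hx.1) (h.cum_nonneg hy.1)).trans (h.lip y x)
  have h1 := hac.integral_deriv_eq_sub
  have h2 : ∫ u in (0:ℝ)..s, a u * Real.exp (-cum a u)
      = ∫ u in (0:ℝ)..s, - deriv (fun u => Real.exp (-cum a u)) u := by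
    refine intervalIntegral.integral_congr_ae ?_
    filter_upwards [(h.ii 0 s).ae_hasDerivAt_integral] with x hx hxs
    have h3 : HasDerivAt (cum a) (a x) x :=
      hx (Set.uIoc_subset_uIcc hxs) 0 (by simp)
    have h4 := h3.neg.exp.deriv
    have h5 : (fun u => Real.exp (-cum a u)) = fun u => Real.exp ((-cum a) u) := rfl
    rw [h5, h4]
    simp only [Pi.neg_apply]; ring
  rw [h2, intervalIntegral.integral_neg, h1, cum_zero]
  simp

lemma Haz.tau_le (h : Haz a M) {s x : ℝ} (hs : 0 ≤ s) :
    tau a x ≤ ENNReal.ofReal s ↔ x ≤ cum a s := by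
  constructor
  · intro hle
    by_contra hlt
    push Not at hlt
    -- by continuity `cum a < x` slightly beyond `s`
    have hev : ∀ᶠ t in nhds s, cum a t < x := h.cont.continuousAt.eventually_lt_const hlt
    obtain ⟨ε, hε, hball⟩ := Metric.eventually_nhds_iff.1 hev
    have h1 : cum a (s + ε / 2) < x := hball (by
      rw [Real.dist_eq, abs_of_pos (by linarith)]; linarith)
    have h2 : ENNReal.ofReal (s + ε / 2) ≤ tau a x := by
      refine le_sInf ?_
      rintro u ⟨t, ht, rfl, hx⟩
      refine ENNReal.ofReal_le_ofReal ?_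
      by_contra hc
      have := h.mono (le_of_not_ge hc)
      have hx' : x ≤ cum a t := hx
      linarith
    have h3 := (ENNReal.ofReal_le_ofReal_iff hs).1 (h2.trans hle)
    linarith
  · intro hx
    exact sInf_le ⟨s, hs, rfl, hx⟩

lemma Haz.lt_tau (h : Haz a M) {s x : ℝ} (hs : 0 ≤ s) :
    ENNReal.ofReal s < tau a x ↔ cum a s < x := by
  rw [← not_le, h.tau_le hs, not_le]

lemma Haz.meas_tau (h : Haz a M) : Measurable (tau a) := by
  refine measurable_of_Iic fun c => ?_
  rcases eq_or_ne c ⊤ with rfl | hc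
  · simp
  · have : tau a ⁻¹' Set.Iic c = Set.Iic (cum a c.toReal) := by
      ext x
      simp only [Set.mem_preimage, Set.mem_Iic]
      rw [← h.tau_le ENNReal.toReal_nonneg, ENNReal.ofReal_toReal hc]
    rw [this]; exact measurableSet_Iic

variable {E : Measure ℝ} [IsProbabilityMeasure E]

/-- tails of the exponential law -/
def IsExp (E : Measure ℝ) : Prop := ∀ s : ℝ, 0 ≤ s → E (Set.Ioi s) = ENNReal.ofReal (Real.exp (-s))

lemma real_Ioi (hE : IsExp E) {s : ℝ} (hs : 0 ≤ s) : E.real (Set.Ioi s) = Real.exp (-s) := by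
  rw [Measure.real, hE s hs, ENNReal.toReal_ofReal (Real.exp_pos _).le]

lemma real_Iic (hE : IsExp E) {s : ℝ} (hs : 0 ≤ s) : E.real (Set.Iic s) = 1 - Real.exp (-s) := by
  rw [← real_Ioi hE hs, ← Set.compl_Ioi, probReal_compl_eq_one_sub measurableSet_Ioi]

lemma null_singleton (hE : IsExp E) {s : ℝ} (hs : 0 ≤ s) : E {s} = 0 := by
  have key : ∀ ε : ℝ, 0 < ε → E.real {s} ≤ ε := by
    intro ε hε
    rcases hs.eq_or_lt with rfl | hs'
    · have h1 : E.real {(0:ℝ)} ≤ E.real (Set.Iic 0) := measureReal_mono (by simp)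
      rw [real_Iic hE le_rfl] at h1
      simp only [neg_zero, Real.exp_zero, sub_self] at h1; linarith
    · set r := max 0 (s - ε) with hr
      have hr0 : 0 ≤ r := le_max_left _ _
      have hrs : r < s := max_lt hs' (by linarith)
      have h1 : E.real {s} ≤ E.real (Set.Ioi r \ Set.Ioi s) :=
        measureReal_mono (by rintro x rfl; exact ⟨hrs, by simp⟩)
      rw [measureReal_sdiff (Set.Ioi_subset_Ioi hrs.le) measurableSet_Ioi, real_Ioi hE hr0, real_Ioi hE hs] at h1
      have h2 := (le_abs_self _).trans (exp_lip hr0 hs)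
      rw [abs_of_neg (by linarith)] at h2
      have := le_max_right 0 (s - ε)
      linarith
  have h0 : E.real {s} = 0 :=
    le_antisymm (le_of_forall_pos_le_add fun ε hε => by simpa using key ε hε) measureReal_nonneg
  exact (measureReal_eq_zero_iff).1 h0

lemma Haz.null_tau (h : Haz a M) (hE : IsExp E) {u : ℝ} (hu : 0 ≤ u) :
    E {x | tau a x = ENNReal.ofReal u} = 0 := by
  refine measure_mono_null (t := {cum a u} ∪ Set.Iic 0) ?_ ?_
  · intro x hx
    have hx1 : x ≤ cum a u := (h.tau_le hu).1 (le_of_eq hx)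
    by_contra hc
    simp only [Set.mem_union, Set.mem_singleton_iff, Set.mem_Iic, not_or, not_le] at hc
    have hlt : x < cum a u := lt_of_le_of_ne hx1 hc.1
    have hu' : 0 < u := by
      rcases hu.eq_or_lt with rfl | h'
      · rw [cum_zero] at hlt; linarith
      · exact h'
    have hev : ∀ᶠ t in nhds u, x < cum a t := h.cont.continuousAt.eventually_const_lt hlt
    obtain ⟨ε, hε, hball⟩ := Metric.eventually_nhds_iff.1 hev
    set r := max 0 (u - ε / 2) with hr
    have hru : r < u := max_lt hu' (by linarith)
    have h1 : x < cum a r := hball (by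
      rw [Real.dist_eq, abs_of_neg (by linarith)]
      have := le_max_right 0 (u - ε/2); linarith)
    have h2 := (h.tau_le (le_max_left 0 (u - ε/2))).2 h1.le
    rw [show tau a x = ENNReal.ofReal u from hx, ENNReal.ofReal_le_ofReal_iff (le_max_left _ _)] at h2
    linarith
  · refine measure_union_null (null_singleton hE (h.cum_nonneg hu)) ?_
    have := real_Iic hE le_rfl
    simp only [neg_zero, Real.exp_zero, sub_self] at this
    exact (measureReal_eq_zero_iff).1 this

/-- `P(u ≤ τ) = exp(-A u)` -/
lemma Haz.real_ge (h : Haz a M) (hE : IsExp E) {u : ℝ} (hu : 0 ≤ u) :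
    E.real {x | ENNReal.ofReal u ≤ tau a x} = Real.exp (-cum a u) := by
  rw [← real_Ioi hE (h.cum_nonneg hu)]
  refine measureReal_congr ?_
  have h0 : ∀ᵐ x ∂E, tau a x ≠ ENNReal.ofReal u := by
    rw [ae_iff]; simpa using h.null_tau hE hu
  filter_upwards [h0] with x hx
  refine propext ?_
  change ENNReal.ofReal u ≤ tau a x ↔ cum a u < x
  rw [← h.lt_tau hu]
  exact ⟨fun h' => lt_of_le_of_ne h' hx.symm, le_of_lt⟩

lemma Haz.real_between (h : Haz a M) (hE : IsExp E) {u δ : ℝ} (hu : 0 ≤ u) (hδ : 0 ≤ δ) :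
    E.real {x | ENNReal.ofReal u < tau a x ∧ tau a x < ENNReal.ofReal u + ENNReal.ofReal δ}
      = Real.exp (-cum a u) - Real.exp (-cum a (u + δ)) := by
  rw [← ENNReal.ofReal_add hu hδ]
  have e : {x | ENNReal.ofReal u < tau a x ∧ tau a x < ENNReal.ofReal (u + δ)}
     = {x | ENNReal.ofReal u < tau a x} \ {x | ENNReal.ofReal (u + δ) ≤ tau a x} := by
    ext x; simp
  have e1 : {x | ENNReal.ofReal u < tau a x} = Set.Ioi (cum a u) := by
    ext x; exact h.lt_tau hu
  have hm : MeasurableSet {x | ENNReal.ofReal (u + δ) ≤ tau a x} :=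
    measurableSet_le measurable_const h.meas_tau
  rcases hδ.eq_or_lt with rfl | hδ'
  · simp only [add_zero, sub_self]
    convert measureReal_empty (μ := E)
    ext x; simp only [Set.mem_ofPred_eq, Set.mem_empty_iff_false, iff_false, not_and]
    exact fun h1 h2 => lt_asymm h1 h2
  rw [e, measureReal_sdiff _ hm, h.real_ge hE (by positivity), e1, real_Ioi hE (h.cum_nonneg hu)]
  intro x hx
  exact lt_of_lt_of_le ((ENNReal.ofReal_lt_ofReal_iff (by linarith)).2 (by linarith)) hx

/-- the law of `τ` on `[0,T]` has density `a e^{-A}`. -/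
lemma Haz.law (h : Haz a M) (hE : IsExp E) {T : ℝ} (hT : 0 ≤ T) :
    (E.restrict {x | tau a x ≤ ENNReal.ofReal T}).map (fun x => (tau a x).toReal)
      = (volume.restrict (Set.Ioc 0 T)).withDensity
          (fun u => ENNReal.ofReal (a u * Real.exp (-cum a u))) := by
  have hmt : Measurable (fun x => (tau a x).toReal) := h.meas_tau.ennreal_toReal
  have : IsFiniteMeasure ((E.restrict {x | tau a x ≤ ENNReal.ofReal T}).map
      (fun x => (tau a x).toReal)) := Measure.isFiniteMeasure_map _ _
  refine Measure.ext_of_Iic _ _ fun s => ?_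
  rw [Measure.map_apply hmt measurableSet_Iic, Measure.restrict_apply (hmt measurableSet_Iic),
    withDensity_apply _ measurableSet_Iic, Measure.restrict_restrict measurableSet_Iic]
  rcases lt_or_ge s 0 with hs | hs
  · have e1 : (fun x => (tau a x).toReal) ⁻¹' Set.Iic s = ∅ := by
      ext x
      simp only [Set.mem_preimage, Set.mem_Iic, Set.mem_empty_iff_false, iff_false, not_le]
      exact lt_of_lt_of_le hs ENNReal.toReal_nonneg
    have e2 : Set.Iic s ∩ Set.Ioc 0 T = ∅ := by
      ext x; simp only [Set.mem_inter_iff, Set.mem_Iic, Set.mem_Ioc, Set.mem_empty_iff_false, iff_false]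
      rintro ⟨h1, h2, -⟩; linarith
    rw [e1, e2]; simp
  · have hr : 0 ≤ min s T := le_min hs hT
    have e1 : (fun x => (tau a x).toReal) ⁻¹' Set.Iic s ∩ {x | tau a x ≤ ENNReal.ofReal T}
        = Set.Iic (cum a (min s T)) := by
      ext x
      simp only [Set.mem_inter_iff, Set.mem_preimage, Set.mem_Iic, Set.mem_ofPred_eq]
      rw [← h.tau_le hr]
      constructor
      · rintro ⟨h1, h2⟩
        have hfin : tau a x ≠ ⊤ := ne_top_of_le_ne_top ENNReal.ofReal_ne_top h2
        rw [ENNReal.ofReal_min]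
        exact le_min ((ENNReal.le_ofReal_iff_toReal_le hfin hs).2 h1) h2
      · intro h1
        have hfin : tau a x ≠ ⊤ := ne_top_of_le_ne_top ENNReal.ofReal_ne_top h1
        rw [ENNReal.ofReal_min] at h1
        exact ⟨(ENNReal.le_ofReal_iff_toReal_le hfin hs).1 (h1.trans (min_le_left _ _)),
          h1.trans (min_le_right _ _)⟩
    have e2 : Set.Iic s ∩ Set.Ioc 0 T = Set.Ioc 0 (min s T) := by
      ext x; simp only [Set.mem_inter_iff, Set.mem_Iic, Set.mem_Ioc, le_min_iff]; tauto
    rw [e1, e2]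
    have hii : IntervalIntegrable (fun u => a u * Real.exp (-cum a u)) volume 0 (min s T) :=
      (h.ii _ _).mul_continuousOn (Continuous.continuousOn (by have := h.cont; fun_prop))
    rw [← ofReal_integral_eq_lintegral_ofReal
      ((intervalIntegrable_iff_integrableOn_Ioc_of_le hr).1 hii)
      (Filter.Eventually.of_forall fun u => mul_nonneg (h.nonneg u) (Real.exp_pos _).le),
      ← intervalIntegral.integral_of_le hr, h.ftc hr, ← real_Iic hE (h.cum_nonneg hr),
      ofReal_measureReal]

lemma Haz.integral_law (h : Haz a M) (hE : IsExp E) {T : ℝ} (hT : 0 ≤ T) {g : ℝ → ℝ}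
    (hg : Measurable g) :
    ∫ x, Set.indicator {x | tau a x ≤ ENNReal.ofReal T} (fun x => g (tau a x).toReal) x ∂E
      = ∫ u in (0:ℝ)..T, g u * (a u * Real.exp (-cum a u)) := by
  have hmt : Measurable (fun x => (tau a x).toReal) := h.meas_tau.ennreal_toReal
  rw [integral_indicator (measurableSet_le h.meas_tau measurable_const),
    intervalIntegral.integral_of_le hT,
    ← integral_map (μ := E.restrict {x | tau a x ≤ ENNReal.ofReal T}) (φ := fun x => (tau a x).toReal) (f := g) hmt.aemeasurable hg.aestronglyMeasurable, h.law hE hT,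
    integral_withDensity_eq_integral_toReal_smul]
  · refine integral_congr_ae (Filter.Eventually.of_forall fun u => ?_)
    simp only [smul_eq_mul]
    rw [ENNReal.toReal_ofReal (mul_nonneg (h.nonneg u) (Real.exp_pos _).le), mul_comm]
  · exact (h.meas.mul (Real.continuous_exp.measurable.comp h.cont.measurable.neg)).ennreal_ofReal
  · simp

lemma Haz.ii_phi (h : Haz a M) {φ K : ℝ → ℝ} {C : ℝ} (hφ : Measurable φ) (hC : ∀ u, |φ u| ≤ C)
    (hK : Continuous K) (s t : ℝ) :
    IntervalIntegrable (fun u => φ u * (a u * K u)) volume s t := by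
  have h1 : IntervalIntegrable (fun u => a u * K u) volume s t :=
    (h.ii s t).mul_continuousOn hK.continuousOn
  rw [intervalIntegrable_iff] at h1 ⊢
  exact Integrable.bdd_mul (c := C) h1 hφ.aestronglyMeasurable
    (Filter.Eventually.of_forall fun u => by rw [Real.norm_eq_abs]; exact hC u)

lemma toReal_of_le {t : ℝ≥0∞} {T : ℝ} (h : t ≤ ENNReal.ofReal T) : ENNReal.ofReal t.toReal = t :=
  ENNReal.ofReal_toReal (ne_top_of_le_ne_top ENNReal.ofReal_ne_top h)

lemma integrable_of_bdd {X : Type*} [MeasurableSpace X] {μ : Measure X} [IsFiniteMeasure μ]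
    {f : X → ℝ} (hf : Measurable f) {C : ℝ} (hC : ∀ x, |f x| ≤ C) : Integrable f μ :=
  Integrable.of_bound hf.aestronglyMeasurable C
    (Filter.Eventually.of_forall fun u => by rw [Real.norm_eq_abs]; exact hC u)

lemma abs_indicator_le {X : Type*} {s : Set X} {f : X → ℝ} {C : ℝ} (hC : ∀ x, |f x| ≤ C) (x : X) :
    |s.indicator f x| ≤ C := by
  by_cases hx : x ∈ s
  · rw [Set.indicator_of_mem hx]; exact hC x
  · rw [Set.indicator_of_notMem hx, abs_zero]; exact (abs_nonneg _).trans (hC x)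

lemma det {b : ℝ → ℝ} {N : ℝ} (ha : Haz a M) (hb : Haz b N) {E' : Measure ℝ}
    [IsProbabilityMeasure E'] (hE : IsExp E) (hE' : IsExp E') {φ : ℝ → ℝ} (hφ : Measurable φ)
    {C : ℝ} (hC : ∀ u, |φ u| ≤ C) {δ T : ℝ} (hδ : 0 < δ) (hT : 0 < T) :
    ∫ z, Set.indicator {z : ℝ × ℝ | min (tau a z.1) (tau b z.2) ≤ ENNReal.ofReal T ∧
          tau a z.1 < tau b z.2 + ENNReal.ofReal δ}
        (fun z => φ (min (tau a z.1) (tau b z.2)).toReal) z ∂(E.prod E')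
      = ∫ u in (0:ℝ)..T, φ u * (a u + b u * (1 - Real.exp (-(cum a (u + δ) - cum a u)))) *
          Real.exp (-(cum a u + cum b u)) := by
  have hta : Measurable fun z : ℝ × ℝ => tau a z.1 := ha.meas_tau.comp measurable_fst
  have htb : Measurable fun z : ℝ × ℝ => tau b z.2 := hb.meas_tau.comp measurable_snd
  have hcA := ha.cont
  have hcB := hb.cont
  set s1 : Set (ℝ × ℝ) := {z | tau a z.1 ≤ ENNReal.ofReal T ∧ tau a z.1 ≤ tau b z.2} with hs1
  set s2 : Set (ℝ × ℝ) := {z | tau b z.2 ≤ ENNReal.ofReal T ∧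
    (tau b z.2 < tau a z.1 ∧ tau a z.1 < tau b z.2 + ENNReal.ofReal δ)} with hs2
  have ms1 : MeasurableSet s1 :=
    (measurableSet_le hta measurable_const).inter (measurableSet_le hta htb)
  have ms2 : MeasurableSet s2 :=
    (measurableSet_le htb measurable_const).inter ((measurableSet_lt htb hta).inter
      (measurableSet_lt hta (htb.add_const _)))
  set f1 : ℝ × ℝ → ℝ := s1.indicator (fun z => φ (tau a z.1).toReal) with hf1
  set f2 : ℝ × ℝ → ℝ := s2.indicator (fun z => φ (tau b z.2).toReal) with hf2
  have if1 : Integrable f1 (E.prod E') :=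
    integrable_of_bdd ((hφ.comp hta.ennreal_toReal).indicator ms1)
      (abs_indicator_le fun z => hC _)
  have if2 : Integrable f2 (E.prod E') :=
    integrable_of_bdd ((hφ.comp htb.ennreal_toReal).indicator ms2)
      (abs_indicator_le fun z => hC _)
  have hsplit : (fun z => Set.indicator {z : ℝ × ℝ | min (tau a z.1) (tau b z.2) ≤ ENNReal.ofReal T ∧
          tau a z.1 < tau b z.2 + ENNReal.ofReal δ}
        (fun z => φ (min (tau a z.1) (tau b z.2)).toReal) z) = fun z => f1 z + f2 z := by
    funext z
    simp only [hf1, hf2, Set.indicator_apply, hs1, hs2, Set.mem_ofPred_eq]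
    rcases le_or_gt (tau a z.1) (tau b z.2) with hle | hlt
    · simp only [min_eq_left hle]
      by_cases hTz : tau a z.1 ≤ ENNReal.ofReal T
      · have h1 : tau a z.1 < tau b z.2 + ENNReal.ofReal δ := by
          have hfin : tau a z.1 ≠ ⊤ := ne_top_of_le_ne_top ENNReal.ofReal_ne_top hTz
          exact (ENNReal.lt_add_right hfin (b := ENNReal.ofReal δ)
            (ENNReal.ofReal_pos.2 hδ).ne').trans_le (by gcongr)
        simp [hTz, hle, h1, not_lt.2 hle]
      · simp [hTz, not_lt.2 hle]
    · simp only [min_eq_right hlt.le]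
      simp [hlt, not_le.2 hlt]
  have hint1 : ∫ z, f1 z ∂(E.prod E')
      = ∫ u in (0:ℝ)..T, (φ u * Real.exp (-cum b u)) * (a u * Real.exp (-cum a u)) := by
    rw [integral_prod _ if1,
      ← ha.integral_law hE hT.le (g := fun u => φ u * Real.exp (-cum b u)) (by fun_prop)]
    refine integral_congr_ae (Filter.Eventually.of_forall fun x => ?_)
    dsimp only
    by_cases hx : tau a x ≤ ENNReal.ofReal T
    · rw [Set.indicator_of_mem (by exact hx)]
      have e : (fun y => f1 (x, y)) = Set.indicator
          {y | ENNReal.ofReal (tau a x).toReal ≤ tau b y} (fun _ => φ (tau a x).toReal) := by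
        funext y
        rw [toReal_of_le hx]
        simp [hf1, Set.indicator_apply, hs1, hx]
      rw [e, integral_indicator_const _ (measurableSet_le measurable_const hb.meas_tau),
        hb.real_ge hE' ENNReal.toReal_nonneg, smul_eq_mul, mul_comm]
    · rw [Set.indicator_of_notMem (by exact hx)]
      have e : (fun y => f1 (x, y)) = fun _ => 0 := by
        funext y
        simp [hf1, Set.indicator_apply, hs1, hx]
      rw [e]; simp
  have hint2 : ∫ z, f2 z ∂(E.prod E')
      = ∫ u in (0:ℝ)..T, (φ u * (Real.exp (-cum a u) - Real.exp (-cum a (u + δ)))) *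
          (b u * Real.exp (-cum b u)) := by
    rw [integral_prod_symm _ if2,
      ← hb.integral_law hE' hT.le
        (g := fun u => φ u * (Real.exp (-cum a u) - Real.exp (-cum a (u + δ)))) (by fun_prop)]
    refine integral_congr_ae (Filter.Eventually.of_forall fun y => ?_)
    dsimp only
    by_cases hy : tau b y ≤ ENNReal.ofReal T
    · rw [Set.indicator_of_mem (by exact hy)]
      have e : (fun x => f2 (x, y)) = Set.indicator
          {x | ENNReal.ofReal (tau b y).toReal < tau a x ∧
            tau a x < ENNReal.ofReal (tau b y).toReal + ENNReal.ofReal δ}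
          (fun _ => φ (tau b y).toReal) := by
        funext x
        rw [toReal_of_le hy]
        simp [hf2, Set.indicator_apply, hs2, hy]
      have hms : MeasurableSet {x | ENNReal.ofReal (tau b y).toReal < tau a x ∧
            tau a x < ENNReal.ofReal (tau b y).toReal + ENNReal.ofReal δ} :=
        (measurableSet_lt measurable_const ha.meas_tau).inter
          (measurableSet_lt ha.meas_tau measurable_const)
      rw [e, integral_indicator_const _ hms,
        ha.real_between hE ENNReal.toReal_nonneg hδ.le, smul_eq_mul, mul_comm]
    · rw [Set.indicator_of_notMem (by exact hy)]
      have e : (fun x => f2 (x, y)) = fun _ => 0 := by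
        funext x
        simp [hf2, Set.indicator_apply, hs2, hy]
      rw [e]; simp
  rw [hsplit, integral_add if1 if2, hint1, hint2, ← intervalIntegral.integral_add]
  · refine intervalIntegral.integral_congr fun u _ => ?_
    beta_reduce
    have e1 : Real.exp (-(cum a u + cum b u)) = Real.exp (-cum a u) * Real.exp (-cum b u) := by
      rw [← Real.exp_add]; ring_nf
    have e2 : Real.exp (-cum a (u + δ)) =
        Real.exp (-(cum a (u + δ) - cum a u)) * Real.exp (-cum a u) := by
      rw [← Real.exp_add]; ring_nf
    rw [e1, e2]; ring
  · have := ha.ii_phi hφ hC (K := fun u => Real.exp (-cum b u) * Real.exp (-cum a u))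
      (by fun_prop) 0 T
    refine this.congr (fun u _ => ?_)
    ring
  · have := hb.ii_phi hφ hC (K := fun u => (Real.exp (-cum a u) - Real.exp (-cum a (u + δ))) *
      Real.exp (-cum b u)) (by fun_prop) 0 T
    refine this.congr (fun u _ => ?_)
    ring

end

section joint
variable {Ω' : Type*} [mΩ' : MeasurableSpace Ω'] {lam : ℝ → Ω' → ℝ} {M : ℝ}

lemma haz_of (hm : Measurable (Function.uncurry lam)) (h0 : ∀ t ω, 0 ≤ lam t ω)
    (hM : ∀ t ω, lam t ω ≤ M) (ω : Ω') : Haz (fun t => lam t ω) M :=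
  ⟨hm.comp (measurable_id.prodMk measurable_const), fun t => h0 t ω, fun t => hM t ω⟩

lemma meas_cum (hm : Measurable (Function.uncurry lam)) (t : ℝ) :
    Measurable fun ω => cum (fun t => lam t ω) t := by
  have hs : StronglyMeasurable (Function.uncurry fun ω t => lam t ω) :=
    (hm.comp measurable_swap).stronglyMeasurable
  unfold cum
  simp only [intervalIntegral]
  exact (hs.integral_prod_right).measurable.sub (hs.integral_prod_right).measurable

lemma meas_tau_joint (hm : Measurable (Function.uncurry lam)) (h0 : ∀ t ω, 0 ≤ lam t ω)
    (hM : ∀ t ω, lam t ω ≤ M) :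
    Measurable fun p : ℝ × Ω' => tau (fun t => lam t p.2) p.1 := by
  refine measurable_of_Iic fun c => ?_
  rcases eq_or_ne c ⊤ with rfl | hc
  · simp
  · have : (fun p : ℝ × Ω' => tau (fun t => lam t p.2) p.1) ⁻¹' Set.Iic c
        = {p | p.1 ≤ cum (fun t => lam t p.2) c.toReal} := by
      ext p
      simp only [Set.mem_preimage, Set.mem_Iic, Set.mem_ofPred_eq]
      rw [← (haz_of hm h0 hM p.2).tau_le ENNReal.toReal_nonneg, ENNReal.ofReal_toReal hc]
    rw [this]
    exact measurableSet_le measurable_fst ((meas_cum hm _).comp measurable_snd)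

/-- The main identity, with `Z` generating the information independent of the thresholds. -/
lemma main {Ω : Type*} {m0 : MeasurableSpace Ω} {Q : Measure Ω} [IsProbabilityMeasure Q]
    {Z : Ω → Ω'} (hZ : Measurable Z) {lamC lamI φ : ℝ → Ω' → ℝ} {MC MI Mφ : ℝ}
    (hC : Measurable (Function.uncurry lamC)) (hC0 : ∀ t ω, 0 ≤ lamC t ω)
    (hCM : ∀ t ω, lamC t ω ≤ MC)
    (hI : Measurable (Function.uncurry lamI)) (hI0 : ∀ t ω, 0 ≤ lamI t ω)
    (hIM : ∀ t ω, lamI t ω ≤ MI)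
    (hφ : Measurable (Function.uncurry φ)) (hφM : ∀ t ω, |φ t ω| ≤ Mφ)
    {ξC ξI : Ω → ℝ} (mC : Measurable ξC) (mI : Measurable ξI)
    (hEC : IsExp (Q.map ξC)) (hEI : IsExp (Q.map ξI))
    (hind : IndepFun ξC ξI Q) (hindZ : IndepFun (fun ω => (ξC ω, ξI ω)) Z Q)
    {δ T : ℝ} (hδ : 0 < δ) (hT : 0 < T) :
    ∫ ω, Set.indicator {ω | min (tau (fun t => lamC t (Z ω)) (ξC ω)) (tau (fun t => lamI t (Z ω)) (ξI ω))
            ≤ ENNReal.ofReal T ∧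
          tau (fun t => lamC t (Z ω)) (ξC ω)
            < tau (fun t => lamI t (Z ω)) (ξI ω) + ENNReal.ofReal δ}
        (fun ω => φ (min (tau (fun t => lamC t (Z ω)) (ξC ω))
          (tau (fun t => lamI t (Z ω)) (ξI ω))).toReal (Z ω)) ω ∂Q
      = ∫ ω, (∫ u in (0:ℝ)..T, φ u (Z ω) * (lamC u (Z ω) + lamI u (Z ω) *
          (1 - Real.exp (-(cum (fun t => lamC t (Z ω)) (u + δ) - cum (fun t => lamC t (Z ω)) u)))) *
          Real.exp (-(cum (fun t => lamC t (Z ω)) u + cum (fun t => lamI t (Z ω)) u))) ∂Q := by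
  have : IsProbabilityMeasure (Q.map ξC) := Measure.isProbabilityMeasure_map mC.aemeasurable
  have : IsProbabilityMeasure (Q.map ξI) := Measure.isProbabilityMeasure_map mI.aemeasurable
  have : IsProbabilityMeasure (Q.map Z) := Measure.isProbabilityMeasure_map hZ.aemeasurable
  have mtC : Measurable fun p : (ℝ × ℝ) × Ω' => tau (fun t => lamC t p.2) p.1.1 :=
    (meas_tau_joint hC hC0 hCM).comp ((measurable_fst.comp measurable_fst).prodMk measurable_snd)
  have mtI : Measurable fun p : (ℝ × ℝ) × Ω' => tau (fun t => lamI t p.2) p.1.2 :=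
    (meas_tau_joint hI hI0 hIM).comp ((measurable_snd.comp measurable_fst).prodMk measurable_snd)
  set S : Set ((ℝ × ℝ) × Ω') := {p | min (tau (fun t => lamC t p.2) p.1.1)
      (tau (fun t => lamI t p.2) p.1.2) ≤ ENNReal.ofReal T ∧
    tau (fun t => lamC t p.2) p.1.1 < tau (fun t => lamI t p.2) p.1.2 + ENNReal.ofReal δ} with hS
  have mS : MeasurableSet S := (measurableSet_le (mtC.min mtI) measurable_const).inter
    (measurableSet_lt mtC (mtI.add_const _))
  set G : (ℝ × ℝ) × Ω' → ℝ := S.indicator (fun p => φ (min (tau (fun t => lamC t p.2) p.1.1)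
      (tau (fun t => lamI t p.2) p.1.2)).toReal p.2) with hG
  have mG : Measurable G :=
    (hφ.comp ((mtC.min mtI).ennreal_toReal.prodMk measurable_snd)).indicator mS
  have hlaw : Q.map (fun ω => ((ξC ω, ξI ω), Z ω))
      = ((Q.map ξC).prod (Q.map ξI)).prod (Q.map Z) := by
    rw [(indepFun_iff_map_prod_eq_prod_map_map (mC.prodMk mI).aemeasurable hZ.aemeasurable).1 hindZ,
      (indepFun_iff_map_prod_eq_prod_map_map mC.aemeasurable mI.aemeasurable).1 hind]
  have mall : Measurable (fun ω => ((ξC ω, ξI ω), Z ω)) := (mC.prodMk mI).prodMk hZ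
  have iG : Integrable G (((Q.map ξC).prod (Q.map ξI)).prod (Q.map Z)) :=
    integrable_of_bdd mG (abs_indicator_le fun p => hφM _ _)
  calc _ = ∫ ω, G ((ξC ω, ξI ω), Z ω) ∂Q := rfl
    _ = ∫ p, G p ∂(Q.map (fun ω => ((ξC ω, ξI ω), Z ω))) :=
      (integral_map mall.aemeasurable mG.aestronglyMeasurable).symm
    _ = ∫ w, ∫ z, G (z, w) ∂((Q.map ξC).prod (Q.map ξI)) ∂(Q.map Z) := by
      rw [hlaw, integral_prod_symm _ iG]
    _ = ∫ ω, ∫ z, G (z, Z ω) ∂((Q.map ξC).prod (Q.map ξI)) ∂Q :=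
      integral_map hZ.aemeasurable
        (mG.stronglyMeasurable.integral_prod_left').aestronglyMeasurable
    _ = _ := by
      refine integral_congr_ae (Filter.Eventually.of_forall fun ω => ?_)
      exact det (haz_of hC hC0 hCM (Z ω)) (haz_of hI hI0 hIM (Z ω)) hEC hEI
        (φ := fun u => φ u (Z ω)) (hφ.comp (measurable_id.prodMk measurable_const))
        (fun u => hφM u _) hδ hT

end joint

lemma prog_joint {Ω : Type*} {m0 : MeasurableSpace Ω} {F : Filtration ℝ m0} {u : ℝ → Ω → ℝ}
    (h : IsStronglyProgressive F u) :
    Measurable[(inferInstance : MeasurableSpace ℝ).prod (⨆ t : ℝ, (F t : MeasurableSpace Ω))]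
      (Function.uncurry u) := by
  let mI : MeasurableSpace Ω := ⨆ t : ℝ, (F t : MeasurableSpace Ω)
  refine measurable_of_tendsto_metrizable (f := fun (n : ℕ) (p : ℝ × Ω) => u (min p.1 n) p.2) ?_ ?_
  · intro n
    have h1 := (h (n : ℝ)).measurable
    have h2 : @Measurable (ℝ × Ω) (Set.Iic (n:ℝ) × Ω) _
        (@Prod.instMeasurableSpace _ _ _ (F n))
        (fun p => (⟨min p.1 n, Set.mem_Iic.2 (min_le_right _ _)⟩, p.2)) := by
      refine @Measurable.prodMk (ℝ × Ω) _ (Set.Iic (n:ℝ)) Ω _ (F n) _ _ ?_ ?_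
      · exact (measurable_fst.min measurable_const).subtype_mk
      · exact measurable_snd.mono le_rfl (le_iSup (fun t : ℝ => (F t : MeasurableSpace Ω)) n)
    exact h1.comp h2
  · rw [tendsto_pi_nhds]
    rintro ⟨t, ω⟩
    refine tendsto_const_nhds.congr' ?_
    obtain ⟨N, hN⟩ := exists_nat_ge t
    filter_upwards [Filter.eventually_ge_atTop N] with n hn
    have : t ≤ n := hN.trans (by exact_mod_cast hn)
    simp [Function.uncurry, min_eq_left this]

end Cox

/-- In the Cox construction with cure period `δ > 0`, the
effective intensity of the event that the counterparty defaults before the end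
of the investor's cure period is
`λ^{δ,C}_u = λ^C_u + λ^I_u (1 − exp(−(Λ^C_{u+δ} − Λ^C_u)))`:
`E[1_{τ ≤ T} 1_{τ_C < τ_I + δ} φ_τ] = E[∫_0^T φ_u λ^{δ,C}_u exp(−(Λ^C_u+Λ^I_u)) du]`. -/
theorem stmt_10
    {Ω : Type*} {m0 : MeasurableSpace Ω} {Q : Measure Ω} [IsProbabilityMeasure Q]
    (F : Filtration ℝ m0)
    (lamC lamI : ℝ → Ω → ℝ)
    (hlamCpos : ∀ t ω, 0 ≤ lamC t ω) (hlamIpos : ∀ t ω, 0 ≤ lamI t ω)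
    (MC MI : ℝ) (hlamCbdd : ∀ t ω, lamC t ω ≤ MC) (hlamIbdd : ∀ t ω, lamI t ω ≤ MI)
    (hlamCprog : ProgMeasurable F lamC) (hlamIprog : ProgMeasurable F lamI)
    (ξC ξI : Ω → ℝ) (hξCmeas : Measurable ξC) (hξImeas : Measurable ξI)
    (hξCexp : ∀ s : ℝ, 0 ≤ s → Q {ω | s < ξC ω} = ENNReal.ofReal (Real.exp (-s)))
    (hξIexp : ∀ s : ℝ, 0 ≤ s → Q {ω | s < ξI ω} = ENNReal.ofReal (Real.exp (-s)))
    (hindep : iIndep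
      ![MeasurableSpace.comap ξC inferInstance,
        MeasurableSpace.comap ξI inferInstance,
        ⨆ t : ℝ, (F t : MeasurableSpace Ω)] Q)
    (τC τI : Ω → ℝ≥0∞)
    (hτC : ∀ ω, τC ω = sInf {u : ℝ≥0∞ | ∃ s : ℝ, 0 ≤ s ∧ u = ENNReal.ofReal s ∧
        ξC ω ≤ ∫ v in (0:ℝ)..s, lamC v ω})
    (hτI : ∀ ω, τI ω = sInf {u : ℝ≥0∞ | ∃ s : ℝ, 0 ≤ s ∧ u = ENNReal.ofReal s ∧
        ξI ω ≤ ∫ v in (0:ℝ)..s, lamI v ω})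
    (δ : ℝ) (hδ : 0 < δ)
    (T : ℝ) (hT : 0 < T)
    (φ : ℝ → Ω → ℝ)
    (hφmeas : Measurable (Function.uncurry φ))
    (hφprog : ProgMeasurable F φ)
    (Mφ : ℝ) (hφbdd : ∀ u ω, |φ u ω| ≤ Mφ) :
    ∫ ω, Set.indicator
        {ω' | min (τC ω') (τI ω') ≤ ENNReal.ofReal T ∧
              τC ω' < τI ω' + ENNReal.ofReal δ}
        (fun ω' => φ (min (τC ω') (τI ω')).toReal ω') ω ∂Q
      = ∫ ω, (∫ u in (0:ℝ)..T, φ u ω *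
          (lamC u ω + lamI u ω *
            (1 - Real.exp (-((∫ v in (0:ℝ)..(u + δ), lamC v ω) -
                ∫ v in (0:ℝ)..u, lamC v ω)))) *
          Real.exp (-((∫ v in (0:ℝ)..u, lamC v ω) + ∫ v in (0:ℝ)..u, lamI v ω))) ∂Q := by
  have hle : ∀ i, (![MeasurableSpace.comap ξC inferInstance,
        MeasurableSpace.comap ξI inferInstance,
        ⨆ t : ℝ, (F t : MeasurableSpace Ω)] : Fin 3 → MeasurableSpace Ω) i ≤ m0 := by
    intro i
    fin_cases i
    · exact hξCmeas.comap_le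
    · exact hξImeas.comap_le
    · exact iSup_le fun t => F.le t
  have hind : IndepFun ξC ξI Q := hindep.indep (i := 0) (j := 1) (by decide)
  have hi2 := indep_iSup_of_disjoint hle hindep (S := {0, 1}) (T := {2}) (by simp)
  have hindZ : @IndepFun Ω (ℝ × ℝ) Ω m0 _ (⨆ t : ℝ, (F t : MeasurableSpace Ω))
      (fun ω => (ξC ω, ξI ω)) id Q := by
    refine (@IndepFun_iff_Indep Ω (ℝ × ℝ) Ω m0 _ (⨆ t : ℝ, (F t : MeasurableSpace Ω)) _ _ Q).2 ?_
    refine indep_of_indep_of_le_left (indep_of_indep_of_le_right hi2 ?_) ?_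
    · rw [MeasurableSpace.comap_id]
      simp
    · rw [show (Prod.instMeasurableSpace : MeasurableSpace (ℝ × ℝ)) =
        MeasurableSpace.prod inferInstance inferInstance from rfl, MeasurableSpace.comap_prodMk]
      simp [iSup_or, iSup_sup_eq]
  have hZ : @Measurable Ω Ω m0 (⨆ t : ℝ, (F t : MeasurableSpace Ω)) id :=
    measurable_id'' (iSup_le fun t => F.le t)
  have hEC : Cox.IsExp (Q.map ξC) := fun s hs => by
    rw [Measure.map_apply hξCmeas measurableSet_Ioi]; exact hξCexp s hs
  have hEI : Cox.IsExp (Q.map ξI) := fun s hs => by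
    rw [Measure.map_apply hξImeas measurableSet_Ioi]; exact hξIexp s hs
  have key := @Cox.main Ω (⨆ t : ℝ, (F t : MeasurableSpace Ω)) Ω m0 Q _ id hZ lamC lamI φ MC MI Mφ
    (Cox.prog_joint hlamCprog) hlamCpos hlamCbdd (Cox.prog_joint hlamIprog) hlamIpos hlamIbdd
    (Cox.prog_joint hφprog) hφbdd ξC ξI hξCmeas hξImeas hEC hEI hind hindZ δ T hδ hT
  have eC : τC = fun ω => Cox.tau (fun t => lamC t ω) (ξC ω) := funext hτC
  have eI : τI = fun ω => Cox.tau (fun t => lamI t ω) (ξI ω) := funext hτI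
  rw [eC, eI]
  exact key
end
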